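/- Nonstandard characterization of uniform convergence: for f : ℕ → ℝ → ℝ and g : ℝ → ℝ, TendstoUniformly f g atTop holds if and only if for every infinite hypernatural N and every hyperreal x, the hyperreal Germ.map₂ f N x is infinitely close to g*(x) (i.e. Germ.map₂ f N x − Germ.map g x is infinitesimal). -/

import Mathlib

open Filter Hyperreal

/-!
Uniform convergence of `F` to `f` along `p` says that `(n, x) ↦ (f x, F n x)` tends to the
uniformity as `n` tends to `p`, with no constraint on `x`. Convergence along a countably generated
filter can be tested on sequences, and a sequence of counterexamples stays one modulo any proper
filter finer than `atTop`. Hence it can be tested on germs of sequences, that is, on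
nonstandard points.
-/

open scoped Topology Uniformity

section Germ

variable {ι κ α β : Type*} {l : Filter κ} {φ : Filter ℕ}

theorem germ_tendsto_atTop_iff_forall_const_lt [Preorder β] [NoMaxOrder β] {ψ : Ultrafilter κ}
    {x : Germ (ψ : Filter κ) β} :
    x.Tendsto atTop ↔ ∀ b : β, (↑b : Germ (ψ : Filter κ) β) < x := by
  induction x using Germ.inductionOn with | _ u =>
  exact ⟨fun hu b ↦ Germ.coe_lt.2 (hu.eventually_gt_atTop b),
    fun hu ↦ tendsto_atTop.2 fun b ↦ (Germ.coe_lt.1 (hu b)).mono fun _ ↦ le_of_lt⟩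

theorem tendsto_iff_forall_germ_map_tendsto [φ.NeBot] (hφ : φ ≤ atTop) {p : Filter α}
    [p.IsCountablyGenerated] {q : Filter β} {h : α → β} :
    Tendsto h p q ↔ ∀ x : Germ φ α, x.Tendsto p → (x.map h).Tendsto q := by
  refine ⟨fun hh x hx ↦ ?_, fun hgerm ↦ ?_⟩
  · induction x using Germ.inductionOn with | _ u => exact hh.comp hx
  · by_contra hh
    obtain ⟨s, hs, hfreq⟩ := not_tendsto_iff_exists_frequently_notMem.1 hh
    obtain ⟨u, hup, hus⟩ := exists_seq_forall_of_frequently hfreq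
    have hhu : Tendsto (h ∘ u) φ q := hgerm u (hup.mono_left hφ)
    obtain ⟨n, hn⟩ := (hhu.eventually_mem hs).exists
    exact hus n hn

variable [UniformSpace β]

/-- Two germs of a uniform space are infinitely close: for every entourage, representatives of the
two germs are eventually related by it. For hyperreals this says that `y - x` is infinitesimal. -/
def Microclose (x y : Germ l β) : Prop :=
  (Germ.map₂ Prod.mk x y).Tendsto (𝓤 β)

theorem microclose_iff_sub_tendsto_zero [AddGroup β] [IsUniformAddGroup β] {x y : Germ l β} :
    Microclose x y ↔ (y - x).Tendsto (𝓝 0) := by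
  induction x, y using Germ.inductionOn₂ with | _ u v =>
  rw [Microclose, Germ.map₂_coe, Germ.coe_tendsto, uniformity_eq_comap_nhds_zero,
    tendsto_comap_iff]
  rfl

theorem tendstoUniformlyOnFilter_iff_microclose [φ.NeBot] (hφ : φ ≤ atTop) {p : Filter ι}
    [p.IsCountablyGenerated] {q : Filter α} [q.IsCountablyGenerated] {F : ι → α → β} {f : α → β} :
    TendstoUniformlyOnFilter F f p q ↔
      ∀ N : Germ φ ι, N.Tendsto p → ∀ x : Germ φ α, x.Tendsto q →
        Microclose (x.map f) (Germ.map₂ F N x) := by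
  rw [tendstoUniformlyOnFilter_iff_tendsto, tendsto_iff_forall_germ_map_tendsto hφ]
  constructor
  · intro h N hN x hx
    induction N, x using Germ.inductionOn₂ with | _ m y =>
    exact h ↑(fun i ↦ (m i, y i)) (hN.prodMk hx)
  · intro h z hz
    induction z using Germ.inductionOn with | _ w =>
    exact h ↑(Prod.fst ∘ w) (tendsto_fst.comp hz) ↑(Prod.snd ∘ w) (tendsto_snd.comp hz)

theorem tendstoUniformly_iff_microclose_general [φ.NeBot] (hφ : φ ≤ atTop) {p : Filter ι}
    [p.IsCountablyGenerated] {F : ι → α → β} {f : α → β} :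
    TendstoUniformly F f p ↔
      ∀ N : Germ φ ι, N.Tendsto p → ∀ x : Germ φ α, Microclose (x.map f) (Germ.map₂ F N x) := by
  have htop (x : Germ φ α) : x.Tendsto ⊤ := x.inductionOn fun _ ↦ tendsto_top
  rw [tendstoUniformly_iff_tendstoUniformlyOnFilter, tendstoUniformlyOnFilter_iff_microclose hφ]
  simp only [htop, forall_const]

end Germ

theorem infinitesimal_sub_iff_microclose {x y : ℝ*} : Infinitesimal (x - y) ↔ Microclose y x :=
  isSt_iff_tendsto.trans microclose_iff_sub_tendsto_zero.symm

theorem tendstoUniformly_iff_microclose (f : ℕ → ℝ → ℝ) (g : ℝ → ℝ) :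
    TendstoUniformly f g Filter.atTop ↔
      ∀ N : Filter.Germ (Filter.hyperfilter ℕ : Filter ℕ) ℕ,
        (∀ n : ℕ, (n : Filter.Germ (Filter.hyperfilter ℕ : Filter ℕ) ℕ) < N) →
        ∀ x : ℝ*,
          Infinitesimal (Filter.Germ.map₂ f N x - Filter.Germ.map g x) :=
  (tendstoUniformly_iff_microclose_general Nat.hyperfilter_le_atTop).trans <| forall_congr' fun _ ↦
    imp_congr germ_tendsto_atTop_iff_forall_const_lt <|
      forall_congr' fun _ ↦ infinitesimal_sub_iff_microclose.symm
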